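/- Let d ≥ 1, α > 0, and let r and r' be two integers with r > α and r' > α. Let η be a distribution on ℝ^d that extends continuously to compactly supported C^{min(r,r')} functions. Then the following are equivalent: (i) for every compact K ⊂ ℝ^d there is C with |η(φ_x^λ)| ≤ C λ^{−α} for all φ ∈ B_r, x ∈ K, λ ∈ (0,1]; (ii) the same statement with r replaced by r'. Moreover, for each compact K the best constants in (i) and (ii) (taken over a slightly larger compact set) are each bounded by a multiple, depending only on d, α, r, r', of the other. (The space C^{−α} and its seminorms are, up to equivalence, independent of the choice of r > α in the definition.) -/

import Mathlib

/-!
Decreasing the number of derivatives required of a test function enlarges `B_r`, so for `r ≤ R` the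
bound over `B_r` trivially gives the bound over `B_R`. The content is the converse: a functional
controlled on rescaled `C^R` functions is controlled on a function `φ` which is only `C^r`, as soon
as `r > α`.

By rescaling it is enough to bound `L φ` for `φ ∈ B_r`, where `L h = η (h_x^l)`
(`exists_core_bound`). At level `n`, cover the unit ball by overlapping lattice cells of diameter
`μ = 2 ^ (-n)`, replace `φ` on each cell by a Taylor polynomial of degree `r`, and glue these with a
smooth lattice partition of unity to a smooth function `S n` (`glue`). On cells that leave the unit
ball the zero polynomial is used, so that all functions remain supported in the ball.

* `S 0` is a sum of boundedly many multiples of elements of `B_R` at unit scale (`glue_base`).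
* `S (n + 1) - S n` is a sum, over the `O(μ ^ (-d))` pairs of intersecting cells of the two levels,
  of cutoffs times differences of Taylor polynomials. Each piece has size `μ ^ r` in the `C^R` norm
  at scale `μ`, all derivatives of order above `r` of the polynomials being zero, so `L` is
  `O(μ ^ (r + d - α))` on it (`piece_bound`). The total is `O(μ ^ (r - α))`, which is summable
  because `r > α` (`glue_step`).
* `S n → φ` in `C^r`, because the Taylor remainders are controlled by the modulus of continuity of
  the `r`-th derivative of `φ` (`glue_err`). Continuity of `η` on `C^r` functions then gives
  `L (S n) → L φ`, and summing the telescoping series bounds `L φ`.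
-/

open MeasureTheory Metric Set Filter

noncomputable section

/-- Euclidean space `ℝ^d`. -/
abbrev Rd (d : ℕ) := EuclideanSpace ℝ (Fin d)

/-- The rescaled and recentred test function `φ_x^λ (y) = λ^{-d} φ(λ⁻¹(y-x))`. -/
def scal {d : ℕ} (φ : Rd d → ℝ) (x : Rd d) (l : ℝ) : Rd d → ℝ :=
  fun y => (l ^ d)⁻¹ * φ (l⁻¹ • (y - x))

/-- The set `B_r` of `C^r` test functions supported in the unit ball with `C^r` norm at most 1. -/
def Br (d r : ℕ) : Set (Rd d → ℝ) :=
  {φ | ContDiff ℝ (r : ℕ∞) φ ∧ tsupport φ ⊆ closedBall (0 : Rd d) 1 ∧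
    ∀ i ≤ r, ∀ y, ‖iteratedFDeriv ℝ i φ y‖ ≤ 1}

/-- A smooth compactly supported function. -/
def IsTestFunction {d : ℕ} (f : Rd d → ℝ) : Prop :=
  ContDiff ℝ (⊤ : ℕ∞) f ∧ HasCompactSupport f

/-- The local continuity estimate making a linear functional on functions a distribution:
on every compact set it is bounded by some `C^k` norm of the test function. -/
def IsDistribution {d : ℕ} (u : (Rd d → ℝ) →ₗ[ℝ] ℝ) : Prop :=
  ∀ K : Set (Rd d), IsCompact K → ∃ C : ℝ, ∃ k : ℕ, ∀ f : Rd d → ℝ,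
    IsTestFunction f → tsupport f ⊆ K → ∀ B : ℝ,
      (∀ i ≤ k, ∀ y, ‖iteratedFDeriv ℝ i f y‖ ≤ B) → |u f| ≤ C * B

/-- `η` satisfies the `C^{-α}` bound with constant `C`, test functions in `B_r`, on `K`. -/
def NegBoundOn {d : ℕ} (r : ℕ) (α : ℝ) (η : (Rd d → ℝ) →ₗ[ℝ] ℝ)
    (K : Set (Rd d)) (C : ℝ) : Prop :=
  ∀ φ ∈ Br d r, ∀ x ∈ K, ∀ l : ℝ, 0 < l → l ≤ 1 → |η (scal φ x l)| ≤ C * l ^ (-α)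

/-- The local `C^{-α}` property of `η`, defined using test functions of class `C^r`. -/
def LocalNegBound {d : ℕ} (r : ℕ) (α : ℝ) (η : (Rd d → ℝ) →ₗ[ℝ] ℝ) : Prop :=
  ∀ K : Set (Rd d), IsCompact K → ∃ C : ℝ, NegBoundOn r α η K C

/-- `η` extends continuously to compactly supported `C^m` functions. -/
def CmContinuous {d : ℕ} (m : ℕ) (η : (Rd d → ℝ) →ₗ[ℝ] ℝ) : Prop :=
  ∀ K : Set (Rd d), IsCompact K → ∃ C : ℝ, ∀ f : Rd d → ℝ,
    ContDiff ℝ (m : ℕ∞) f → HasCompactSupport f → tsupport f ⊆ K → ∀ B : ℝ,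
      (∀ i ≤ m, ∀ y, ‖iteratedFDeriv ℝ i f y‖ ≤ B) → |η f| ≤ C * B


/-! ### Symmetry of iterated derivatives and Taylor polynomials -/

section Taylor

variable {E F : Type} [NormedAddCommGroup E] [NormedSpace ℝ E]
  [NormedAddCommGroup F] [NormedSpace ℝ F]

lemma fderiv_fderiv_apply {g : E → F} (hg : ContDiff ℝ 2 g) {x v w : E} :
    fderiv ℝ (fun y => fderiv ℝ g y w) x v = fderiv ℝ (fderiv ℝ g) x v w := by
  have hA : DifferentiableAt ℝ (fderiv ℝ g) x :=
    (hg.fderiv_right (m := 1) (by norm_num)).differentiable (by norm_num) x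
  rw [fderiv_clm_apply hA (differentiableAt_const w)]
  simp

/-- The iterated derivatives of a `C^r` function are symmetric up to order `r`. Permutations are
generated by swaps of neighbours; the swap of the first two entries is the symmetry of a second
derivative, every other swap is inherited from one order below. -/
lemma iteratedFDeriv_perm {r : ℕ} {f : E → F} (hf : ContDiff ℝ r f) :
    ∀ n ≤ r, ∀ (x : E) (σ : Equiv.Perm (Fin n)) (v : Fin n → E),
      iteratedFDeriv ℝ n f x (v ∘ σ) = iteratedFDeriv ℝ n f x v := by
  intro n
  induction n with
  | zero => intro _ x σ v; congr 1; ext i; exact i.elim0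
  | succ n ih =>
    intro hn x σ
    have hσ : σ ∈ Submonoid.closure
        (Set.range fun i : Fin n ↦ Equiv.swap i.castSucc i.succ) := by
      rw [Equiv.Perm.mclosure_swap_castSucc_succ]; trivial
    induction hσ using Submonoid.closure_induction with
    | one => intro v; rfl
    | mul a b _ _ ha hb =>
      intro v
      have : v ∘ (a * b : Equiv.Perm (Fin (n + 1))) = (v ∘ a) ∘ b := rfl
      rw [this, hb, ha]
    | mem τ hτ =>
      obtain ⟨i, rfl⟩ := hτ
      intro v
      cases n with
      | zero => exact i.elim0
      | succ n =>
        have hd : ∀ m < r, Differentiable ℝ (iteratedFDeriv ℝ m f) := fun m hm =>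
          hf.differentiable_iteratedFDeriv (by exact_mod_cast hm)
        refine Fin.cases ?_ (fun j => ?_) i
        · -- the first two entries: second derivative of the `n`-th derivative
          have hc : ContDiff ℝ 2 (iteratedFDeriv ℝ n f) :=
            hf.iteratedFDeriv_right (by norm_cast; omega)
          have hsym := (hc.contDiffAt (x := x)).isSymmSndFDerivAt (by simp)
          have key : ∀ w : Fin (n + 2) → E, iteratedFDeriv ℝ (n + 2) f x w =
              fderiv ℝ (fderiv ℝ (iteratedFDeriv ℝ n f)) x (w 0) (w 1) (Fin.tail (Fin.tail w)) := by
            intro w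
            rw [(hd (n + 1) (by omega) x).iteratedFDeriv_succ_apply_left']
            have hA : DifferentiableAt ℝ (fun y => fderiv ℝ (iteratedFDeriv ℝ n f) y (w 1)) x :=
              ((hc.fderiv_right (m := 1) (by norm_num)).clm_apply contDiff_const).differentiable
                (by norm_num) x
            rw [← fderiv_fderiv_apply hc]
            exact congrArg (fun A : E →L[ℝ] F => A (w 0))
              (fderiv_continuousMultilinear_apply_const hA (Fin.tail (Fin.tail w)))
          rw [key, key]
          have h0 : (v ∘ (Equiv.swap (Fin.castSucc 0) (Fin.succ 0) : Equiv.Perm (Fin (n + 2)))) 0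
              = v 1 := by simp
          have h1 : (v ∘ (Equiv.swap (Fin.castSucc 0) (Fin.succ 0) : Equiv.Perm (Fin (n + 2)))) 1
              = v 0 := by simp
          rw [h0, h1, hsym.eq]
          congr 1
        · -- a later pair: differentiate the symmetry of the derivative one order below
          have h0 : (v ∘ (Equiv.swap j.succ.castSucc j.succ.succ : Equiv.Perm (Fin (n + 2)))) 0
              = v 0 := by
            simp only [Function.comp]
            rw [Equiv.swap_apply_of_ne_of_ne]
            · simp [Fin.ext_iff]
            · simp [Fin.ext_iff]
          have ht : Fin.tail (v ∘ (Equiv.swap j.succ.castSucc j.succ.succ :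
              Equiv.Perm (Fin (n + 2)))) =
              Fin.tail v ∘ (Equiv.swap j.castSucc j.succ : Equiv.Perm (Fin (n + 1))) := by
            ext k
            simp only [Fin.tail, Function.comp]
            congr 1
            rw [show j.succ.castSucc = j.castSucc.succ from rfl]
            exact ((Fin.succ_injective _).swap_apply _ _ _)
          rw [(hd (n + 1) (by omega) x).iteratedFDeriv_succ_apply_left',
            (hd (n + 1) (by omega) x).iteratedFDeriv_succ_apply_left', h0, ht]
          congr 2
          funext y
          exact ih (by omega) y _ _

/-- A polynomial map of degree less than `n` has vanishing `n`-th derivative. -/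
lemma iteratedFDeriv_eq_zero_of_finite (n : ℕ) :
    ∀ {F : Type} [NormedAddCommGroup F] [NormedSpace ℝ F] {f : E → F}
      {p : FormalMultilinearSeries ℝ E F} {x : E},
      HasFiniteFPowerSeriesOnBall f p x n ⊤ → ∀ y, iteratedFDeriv ℝ n f y = 0 := by
  induction n with
  | zero =>
    intro F _ _ f p x h y
    ext v
    simpa using h.eq_zero_of_bound_zero y (by simp)
  | succ n ih =>
    intro F _ _ f p x h y
    have h2 := ih h.fderiv y
    have := norm_iteratedFDeriv_fderiv (𝕜 := ℝ) (f := f) (x := y) (n := n)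
    rw [h2, norm_zero] at this
    exact norm_eq_zero.1 this.symm

lemma iteratedFDeriv_eq_zero_of_le {f : E → F} {n : ℕ} (h : ∀ y, iteratedFDeriv ℝ n f y = 0) :
    ∀ k, n ≤ k → ∀ y, iteratedFDeriv ℝ k f y = 0 := by
  intro k hk
  induction k, hk using Nat.le_induction with
  | base => exact h
  | succ k _ ih =>
    intro y
    have h0 : iteratedFDeriv ℝ k f = fun _ => 0 := funext ih
    ext v
    rw [iteratedFDeriv_succ_apply_left, h0, fderiv_fun_const]
    rfl

/-- Existence of the Taylor polynomial of degree `r` at `p`, characterised by its derivatives. -/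
lemma exists_taylor {r : ℕ} {f : E → ℝ} (hf : ContDiff ℝ r f) (p : E) :
    ∃ T : E → ℝ, (∀ m : ℕ, ContDiff ℝ m T) ∧ (∀ k, r < k → ∀ y, iteratedFDeriv ℝ k T y = 0) ∧
      ∀ k ≤ r, iteratedFDeriv ℝ k T p = iteratedFDeriv ℝ k f p := by
  let q : FormalMultilinearSeries ℝ E ℝ := fun n =>
    if n ≤ r then ((n.factorial : ℝ)⁻¹) • iteratedFDeriv ℝ n f p else 0
  have hq : HasFiniteFPowerSeriesOnBall q.sum q 0 (r + 1) ⊤ := by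
    apply q.hasFiniteFPowerSeriesOnBall_of_finite
    intro m hm
    simp only [q]
    rw [if_neg (by omega)]
  have hT := hq.comp_sub p
  rw [zero_add] at hT
  refine ⟨fun z => q.sum (z - p), ?_, ?_, ?_⟩
  · intro m
    have h1 : AnalyticOnNhd ℝ (fun z => q.sum (z - p)) univ := by
      have := hT.cpolynomialOn.analyticOnNhd
      simpa using this
    exact h1.contDiff
  · intro k hk y
    exact iteratedFDeriv_eq_zero_of_le (iteratedFDeriv_eq_zero_of_finite (r + 1) hT) k hk y
  · intro k hk
    ext v
    rw [hT.toHasFPowerSeriesOnBall.iteratedFDeriv_eq_sum_of_completeSpace]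
    have : ∀ σ : Equiv.Perm (Fin k), q k (fun i => v (σ i)) =
        ((k.factorial : ℝ)⁻¹) * iteratedFDeriv ℝ k f p v := by
      intro σ
      simp only [q]
      rw [if_pos hk, ← iteratedFDeriv_perm hf k hk p σ v]
      rfl
    rw [Finset.sum_congr rfl fun σ _ => this σ]
    rw [Finset.sum_const, Finset.card_univ, Fintype.card_perm, Fintype.card_fin, nsmul_eq_mul,
      ← mul_assoc, mul_inv_cancel₀ (by positivity), one_mul]

/-- Backward integration of a bound on the top derivative from a point where all lower
derivatives vanish. -/
lemma norm_iteratedFDeriv_le_of_flat {r : ℕ} {h : E → ℝ} (hh : ContDiff ℝ r h) {p : E} {ρ ω : ℝ}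
    (hρ : 0 ≤ ρ) (h0 : ∀ k < r, iteratedFDeriv ℝ k h p = 0)
    (htop : ∀ y ∈ closedBall p ρ, ‖iteratedFDeriv ℝ r h y‖ ≤ ω) :
    ∀ k ≤ r, ∀ y ∈ closedBall p ρ, ‖iteratedFDeriv ℝ k h y‖ ≤ ω * ρ ^ (r - k) := by
  have hω : 0 ≤ ω := (norm_nonneg _).trans (htop p (mem_closedBall_self hρ))
  have main : ∀ j ≤ r, ∀ y ∈ closedBall p ρ, ‖iteratedFDeriv ℝ (r - j) h y‖ ≤ ω * ρ ^ j := by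
    intro j
    induction j with
    | zero => intro _ y hy; simpa using htop y hy
    | succ j ih =>
      intro hj y hy
      obtain ⟨k, hk⟩ : ∃ k, r - (j + 1) = k := ⟨_, rfl⟩
      have hk1 : r - j = k + 1 := by omega
      rw [hk]
      have hd : Differentiable ℝ (iteratedFDeriv ℝ k h) :=
        hh.differentiable_iteratedFDeriv (by norm_cast; omega)
      have := (convex_closedBall p ρ).norm_image_sub_le_of_norm_fderiv_le (𝕜 := ℝ)
        (f := iteratedFDeriv ℝ k h) (C := ω * ρ ^ j) (fun z _ => hd z)
        (fun z hz => by
          rw [norm_fderiv_iteratedFDeriv, ← hk1]; exact ih (by omega) z hz)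
        (mem_closedBall_self hρ) hy
      rw [h0 k (by omega), sub_zero] at this
      refine this.trans ?_
      rw [pow_succ, ← mul_assoc]
      gcongr
      rwa [← dist_eq_norm]
  intro k hk y hy
  have := main (r - k) (by omega) y hy
  rwa [Nat.sub_sub_self hk] at this

end Taylor

/-! ### A smooth partition of unity on a lattice -/

section Partition

/-- A smooth function on the line, supported in `[-1, 1]`, whose integer translates sum to one. -/
def theta (t : ℝ) : ℝ := Real.smoothTransition (t + 1) - Real.smoothTransition t

lemma theta_contDiff (m : ℕ) : ContDiff ℝ m theta := by
  have h : ContDiff ℝ m Real.smoothTransition := Real.smoothTransition.contDiff (n := (m : ℕ∞))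
  exact (h.comp (contDiff_id.add contDiff_const)).sub h

lemma theta_eq_zero {t : ℝ} (h : 1 < |t|) : theta t = 0 := by
  unfold theta
  rcases lt_abs.1 h with h | h
  · rw [Real.smoothTransition.one_of_one_le (by linarith),
      Real.smoothTransition.one_of_one_le (by linarith), sub_self]
  · rw [Real.smoothTransition.zero_of_nonpos (by linarith),
      Real.smoothTransition.zero_of_nonpos (by linarith), sub_self]

lemma sum_theta_telescope (t : ℝ) (a : ℤ) (n : ℕ) :
    ∑ k ∈ Finset.Icc a (a + n), theta (t - k) =
      Real.smoothTransition (t - a + 1) - Real.smoothTransition (t - (a + n)) := by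
  induction n with
  | zero => simp [theta]
  | succ n ih =>
    have : Finset.Icc a (a + ((n + 1 : ℕ) : ℤ)) =
        insert (a + ((n + 1 : ℕ) : ℤ)) (Finset.Icc a (a + n)) := by
      ext k; simp only [Finset.mem_Icc, Finset.mem_insert]; push_cast; omega
    rw [this, Finset.sum_insert (by simp), ih, theta]
    push_cast
    ring_nf

lemma sum_theta {t : ℝ} {M : ℕ} (h : |t| ≤ M) :
    ∑ k ∈ Finset.Icc (-(M : ℤ)) M, theta (t - k) = 1 := by
  have := sum_theta_telescope t (-(M : ℤ)) (2 * M)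
  rw [show -(M : ℤ) + ((2 * M : ℕ) : ℤ) = M by push_cast; ring] at this
  rw [this]
  have h' := abs_le.1 h
  push_cast
  rw [Real.smoothTransition.one_of_one_le (by linarith),
    Real.smoothTransition.zero_of_nonpos (by linarith), sub_zero]

variable {d : ℕ}

/-- The product cutoff on `ℝ^d`. -/
def chi (z : Rd d) : ℝ := ∏ j, theta (z j)

/-- The lattice point with integer coordinates `i`. -/
def lat (i : Fin d → ℤ) : Rd d := WithLp.toLp 2 fun j => (i j : ℝ)

/-- The cutoff adapted to the cell of index `i` of the lattice of mesh `1 / N`. -/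
def cut (N : ℝ) (i : Fin d → ℤ) (y : Rd d) : ℝ := chi (N • y - lat i)

/-- The cell of index `i` of the lattice of mesh `1 / N`; neighbouring cells overlap. -/
def box (N : ℝ) (i : Fin d → ℤ) : Set (Rd d) := {y | ∀ j, |N * y j - i j| ≤ 1}

/-- The indices needed to cover the unit ball with cells of mesh `1 / M`. -/
def idx (d M : ℕ) : Finset (Fin d → ℤ) := Fintype.piFinset fun _ => Finset.Icc (-(M : ℤ)) M

lemma card_idx (d M : ℕ) : (idx d M).card = (2 * M + 1) ^ d := by
  unfold idx
  rw [Fintype.card_piFinset_const, Int.card_Icc]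
  congr 1
  omega

lemma chi_contDiff (m : ℕ) : ContDiff ℝ m (chi (d := d)) := by
  unfold chi
  exact contDiff_prod fun j _ => (theta_contDiff m).comp (by fun_prop)

lemma cut_contDiff (m : ℕ) (N : ℝ) (i : Fin d → ℤ) : ContDiff ℝ m (cut N i) :=
  (chi_contDiff m).comp ((contDiff_id.const_smul N).sub contDiff_const)

lemma chi_eq_zero {z : Rd d} (h : ∃ j, 1 < |z j|) : chi z = 0 := by
  obtain ⟨j, hj⟩ := h
  exact Finset.prod_eq_zero (Finset.mem_univ j) (theta_eq_zero hj)

lemma cut_eq_zero {N : ℝ} {i : Fin d → ℤ} {y : Rd d} (h : y ∉ box N i) : cut N i y = 0 := by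
  simp only [box, mem_ofPred_eq, not_forall, not_le] at h
  exact chi_eq_zero (by simpa [lat] using h)

lemma isClosed_box (N : ℝ) (i : Fin d → ℤ) : IsClosed (box N i) := by
  unfold box
  rw [ofPred_forall]
  exact isClosed_iInter fun j => isClosed_le (by fun_prop) continuous_const

lemma sum_cut {M : ℕ} {y : Rd d} (hy : y ∈ closedBall (0 : Rd d) 1) :
    ∑ i ∈ idx d M, cut M i y = 1 := by
  have hy' : ∀ j, |y j| ≤ 1 := fun j =>
    (PiLp.norm_apply_le y j).trans (by simpa using hy)
  have h1 : ∀ i : Fin d → ℤ, cut M i y = ∏ j, theta (M * y j - (i j : ℝ)) := by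
    intro i
    simp [cut, chi, lat]
  rw [Finset.sum_congr rfl fun i _ => h1 i, idx,
    ← Finset.prod_univ_sum (fun _ => Finset.Icc (-(M : ℤ)) M)
      (fun j k => theta (M * y j - (k : ℝ)))]
  refine Finset.prod_eq_one fun j _ => sum_theta ?_
  rw [abs_mul, Nat.abs_cast]
  exact mul_le_of_le_one_right (by positivity) (hy' j)

lemma norm_le_of_coord {z : Rd d} {a : ℝ} (ha : 0 ≤ a) (h : ∀ j, |z j| ≤ a) : ‖z‖ ≤ d * a := by
  have h1 : ‖z‖ ^ 2 ≤ (d * a) ^ 2 := by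
    rw [EuclideanSpace.norm_sq_eq]
    calc ∑ j, ‖z j‖ ^ 2 ≤ ∑ _j : Fin d, a ^ 2 :=
          Finset.sum_le_sum fun j _ => pow_le_pow_left₀ (norm_nonneg _) (h j) 2
      _ = d * a ^ 2 := by simp
      _ ≤ (d * a) ^ 2 := by
          rw [mul_pow]
          gcongr
          rcases Nat.eq_zero_or_pos d with rfl | hd
          · simp
          · exact_mod_cast Nat.le_self_pow two_ne_zero d
  exact abs_le_of_sq_le_sq' h1 (by positivity) |>.2

lemma box_dist {N : ℝ} (hN : 0 < N) {i : Fin d → ℤ} {y z : Rd d} (hy : y ∈ box N i)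
    (hz : z ∈ box N i) : dist y z ≤ 2 * d / N := by
  rw [dist_eq_norm]
  refine (norm_le_of_coord (a := 2 / N) (by positivity) fun j => ?_).trans (le_of_eq (by ring))
  rw [le_div_iff₀ hN]
  rw [show |(y - z) j| * N = |(y - z) j * N| by rw [abs_mul, abs_of_pos hN]]
  have h1 := abs_le.1 (hy j)
  have h2 := abs_le.1 (hz j)
  simp only [PiLp.sub_apply]
  exact abs_le.2 ⟨by linarith, by linarith⟩

open Classical in
/-- Bounded overlap: only boundedly many lattice points are close to a given point. -/
lemma card_close_le (s : Finset (Fin d → ℤ)) (t : Fin d → ℝ) :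
    (s.filter fun i => ∀ j, |t j - i j| ≤ 2).card ≤ 5 ^ d := by
  calc _ ≤ (Fintype.piFinset fun j => Finset.Icc (⌈t j⌉ - 2) (⌈t j⌉ + 2)).card := by
        refine Finset.card_le_card fun i hi => ?_
        rw [Fintype.mem_piFinset]
        intro j
        have h := abs_le.1 ((Finset.mem_filter.1 hi).2 j)
        have h1 := Int.le_ceil (t j)
        have h2 := Int.ceil_lt_add_one (t j)
        rw [Finset.mem_Icc]
        constructor
        · have : ((⌈t j⌉ : ℤ) : ℝ) < i j + 3 := by linarith
          have : ⌈t j⌉ < i j + 3 := by exact_mod_cast this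
          omega
        · have : (i j : ℝ) ≤ ((⌈t j⌉ + 2 : ℤ) : ℝ) := by push_cast; linarith
          exact_mod_cast this
    _ = 5 ^ d := by
        rw [Fintype.card_piFinset]
        have : ∀ j, (Finset.Icc (⌈t j⌉ - 2) (⌈t j⌉ + 2)).card = 5 := by
          intro j; rw [Int.card_Icc]; omega
        simp [this]

lemma norm_iteratedFDeriv_affine {k : ℕ} {f : Rd d → ℝ} (hf : ContDiff ℝ k f) (a : ℝ) (b : Rd d)
    (y : Rd d) :
    ‖iteratedFDeriv ℝ k (fun y => f (a • y + b)) y‖ =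
      |a| ^ k * ‖iteratedFDeriv ℝ k f (a • y + b)‖ := by
  have hg : ContDiff ℝ k fun z => f (z + b) := hf.comp (contDiff_id.add contDiff_const)
  have := congrFun (iteratedFDeriv_comp_const_smul (𝕜 := ℝ) (i := k) a hg) y
  rw [this, norm_smul, norm_pow, Real.norm_eq_abs, iteratedFDeriv_comp_add_right]

lemma exists_chi_bound (d R : ℕ) : ∃ Θ : ℝ, 1 ≤ Θ ∧
    ∀ k ≤ R, ∀ z : Rd d, ‖iteratedFDeriv ℝ k chi z‖ ≤ Θ := by
  have hs : HasCompactSupport (chi (d := d)) := by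
    refine HasCompactSupport.of_support_subset_isCompact
      (isCompact_closedBall (0 : Rd d) (d * 1)) fun z hz => ?_
    rw [mem_closedBall_zero_iff]
    refine norm_le_of_coord zero_le_one fun j => ?_
    by_contra h
    exact hz (chi_eq_zero ⟨j, not_le.1 h⟩)
  have : ∀ k, ∃ B, ∀ z : Rd d, ‖iteratedFDeriv ℝ k chi z‖ ≤ B := fun k =>
    (hs.iteratedFDeriv (𝕜 := ℝ) k).exists_bound_of_continuous
      ((chi_contDiff k).continuous_iteratedFDeriv le_rfl)
  choose B hB using this
  refine ⟨1 + ∑ k ∈ Finset.range (R + 1), |B k|, ?_, fun k hk z => ?_⟩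
  · have := Finset.sum_nonneg fun k (_ : k ∈ Finset.range (R + 1)) => abs_nonneg (B k)
    linarith
  · have := Finset.single_le_sum (fun k _ => abs_nonneg (B k))
      (Finset.mem_range.2 (by omega : k < R + 1))
    have := hB k z
    have := le_abs_self (B k)
    linarith

lemma norm_iteratedFDeriv_cut {R : ℕ} {Θ : ℝ}
    (hΘ : ∀ k ≤ R, ∀ z : Rd d, ‖iteratedFDeriv ℝ k chi z‖ ≤ Θ) {N : ℝ} (hN : 0 ≤ N)
    (i : Fin d → ℤ) {k : ℕ} (hk : k ≤ R) (y : Rd d) :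
    ‖iteratedFDeriv ℝ k (cut N i) y‖ ≤ N ^ k * Θ := by
  have : cut N i = fun y => chi (N • y + -lat i) := by
    funext y; rw [cut, sub_eq_add_neg]
  rw [this, norm_iteratedFDeriv_affine (chi_contDiff k), abs_of_nonneg hN]
  gcongr
  exact hΘ k hk _

end Partition

/-! ### Local Taylor approximations -/

section Approximation

variable {d : ℕ}

lemma norm_iteratedFDeriv_mul_scaled {f g : Rd d → ℝ} {k : ℕ} (hf : ContDiff ℝ k f)
    (hg : ContDiff ℝ k g) {μ a b : ℝ} (hμ : 0 ≤ μ) (ha : 0 ≤ a) {y : Rd d}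
    (h1 : ∀ i ≤ k, μ ^ i * ‖iteratedFDeriv ℝ i f y‖ ≤ a)
    (h2 : ∀ i ≤ k, μ ^ i * ‖iteratedFDeriv ℝ i g y‖ ≤ b) :
    μ ^ k * ‖iteratedFDeriv ℝ k (fun y => f y * g y) y‖ ≤ 2 ^ k * (a * b) := by
  have h := norm_iteratedFDeriv_mul_le hf hg y (n := k) le_rfl
  calc μ ^ k * ‖iteratedFDeriv ℝ k (fun y => f y * g y) y‖
      ≤ μ ^ k * ∑ i ∈ Finset.range (k + 1), (k.choose i : ℝ) * ‖iteratedFDeriv ℝ i f y‖ *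
          ‖iteratedFDeriv ℝ (k - i) g y‖ := by gcongr
    _ = ∑ i ∈ Finset.range (k + 1), (k.choose i : ℝ) * ((μ ^ i * ‖iteratedFDeriv ℝ i f y‖) *
          (μ ^ (k - i) * ‖iteratedFDeriv ℝ (k - i) g y‖)) := by
        rw [Finset.mul_sum]
        refine Finset.sum_congr rfl fun i hi => ?_
        have : μ ^ k = μ ^ i * μ ^ (k - i) := by
          rw [← pow_add]; congr 1; have := Finset.mem_range.1 hi; omega
        rw [this]; ring
    _ ≤ ∑ i ∈ Finset.range (k + 1), (k.choose i : ℝ) * (a * b) := by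
        refine Finset.sum_le_sum fun i hi => ?_
        have hi' := Finset.mem_range.1 hi
        have := h1 i (by omega)
        have := h2 (k - i) (by omega)
        gcongr
    _ = 2 ^ k * (a * b) := by
        rw [← Finset.sum_mul]
        congr 1
        exact_mod_cast Nat.sum_range_choose k

/-- `T` is a polynomial of degree at most `r` that agrees with `φ` on the cell of index `i` and
mesh `1 / N` up to a Taylor remainder, and vanishes on the part of the cell outside the unit ball.
In `err`, `ω` is a modulus of continuity of the top derivative at scale `μ`. -/
structure LocalApprox (r : ℕ) (φ : Rd d → ℝ) (N : ℝ) (i : Fin d → ℤ) (T : Rd d → ℝ) : Prop where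
  smooth : ∀ m : ℕ, ContDiff ℝ m T
  top : ∀ k, r < k → ∀ y, iteratedFDeriv ℝ k T y = 0
  vanish : ∀ y ∈ box N i, y ∉ closedBall (0 : Rd d) 1 → T y = 0
  err : ∀ μ ω : ℝ, 2 * d / N ≤ μ →
    (∀ y z, dist y z ≤ μ → ‖iteratedFDeriv ℝ r φ y - iteratedFDeriv ℝ r φ z‖ ≤ ω) →
    ∀ k ≤ r, ∀ y ∈ box N i, ‖iteratedFDeriv ℝ k (φ - T) y‖ ≤ ω * μ ^ (r - k)

/-- Existence of local approximations. If the cell leaves the unit ball, expand around a point of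
the cell outside the ball: there `φ` vanishes to all orders, so the zero polynomial will do. -/
lemma exists_localApprox {r : ℕ} {φ : Rd d → ℝ} (hφ : φ ∈ Br d r) {N : ℝ} (hN : 0 < N)
    (i : Fin d → ℤ) : ∃ T, LocalApprox r φ N i T := by
  obtain ⟨hc, hsupp, -⟩ := hφ
  have hc : ContDiff ℝ r φ := by exact_mod_cast hc
  have key : ∃ p ∈ box N i, ∃ T : Rd d → ℝ, (∀ m : ℕ, ContDiff ℝ m T) ∧
      (∀ k, r < k → ∀ y, iteratedFDeriv ℝ k T y = 0) ∧
      (∀ y ∈ box N i, y ∉ closedBall (0 : Rd d) 1 → T y = 0) ∧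
      ∀ k ≤ r, iteratedFDeriv ℝ k T p = iteratedFDeriv ℝ k φ p := by
    by_cases h : ∃ p ∈ box N i, p ∉ closedBall (0 : Rd d) 1
    · obtain ⟨p, hp, hpU⟩ := h
      refine ⟨p, hp, 0, fun m => contDiff_const, fun k _ y => ?_, fun _ _ _ => rfl, fun k _ => ?_⟩
      · simp
      · have : iteratedFDeriv ℝ k φ p = 0 := by
          by_contra hne
          exact hpU (hsupp (support_iteratedFDeriv_subset k hne))
        rw [this]
        simp
    · push Not at h
      obtain ⟨T, h1, h2, h3⟩ := exists_taylor hc (N⁻¹ • lat i)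
      refine ⟨N⁻¹ • lat i, ?_, T, h1, h2, fun y hy hyU => absurd (h y hy) hyU, h3⟩
      intro j
      simp [lat, hN.ne']
  obtain ⟨p, hp, T, h1, h2, h3, h4⟩ := key
  refine ⟨T, h1, h2, h3, fun μ ω hμ hω k hk y hy => ?_⟩
  have hμ0 : 0 ≤ μ := le_trans (by positivity) hμ
  have hsub : ∀ k ≤ r, ∀ y, iteratedFDeriv ℝ k (φ - T) y =
      iteratedFDeriv ℝ k φ y - iteratedFDeriv ℝ k T y := fun k hk y =>
    iteratedFDeriv_sub_apply (hc.of_le (by exact_mod_cast hk)).contDiffAt (h1 k).contDiffAt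
  have hconst : ∀ y, iteratedFDeriv ℝ r T y = iteratedFDeriv ℝ r T p := by
    intro y
    refine is_const_of_fderiv_eq_zero (𝕜 := ℝ) ?_ (fun z => ?_) y p
    · exact (h1 (r + 1)).differentiable_iteratedFDeriv (by norm_cast; omega)
    · have := norm_fderiv_iteratedFDeriv (𝕜 := ℝ) (f := T) (x := z) (n := r)
      rw [h2 (r + 1) (by omega), norm_zero] at this
      exact norm_eq_zero.1 this
  refine norm_iteratedFDeriv_le_of_flat (h := φ - T) (p := p) (hc.sub (h1 r)) hμ0 (fun k hk => ?_)
    (fun z hz => ?_) k hk y ((box_dist hN hy hp).trans hμ)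
  · rw [hsub k hk.le, h4 k hk.le, sub_self]
  · rw [hsub r le_rfl, hconst, h4 r le_rfl]
    exact hω z p hz

/-- The derivatives of two nearby local approximations differ by a Taylor remainder, at every
order. -/
lemma LocalApprox.diff_bound {r : ℕ} {φ : Rd d → ℝ} (hφ : φ ∈ Br d r) {N N' : ℝ}
    {i i' : Fin d → ℤ} {T T' : Rd d → ℝ} (hT : LocalApprox r φ N i T)
    (hT' : LocalApprox r φ N' i' T') {μ : ℝ} (hμ0 : 0 ≤ μ) (hμ : 2 * d / N ≤ μ)
    (hμ' : 2 * d / N' ≤ μ) {y : Rd d} (hy : y ∈ box N i) (hy' : y ∈ box N' i') (k : ℕ) :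
    μ ^ k * ‖iteratedFDeriv ℝ k (T - T') y‖ ≤ 4 * μ ^ r := by
  obtain ⟨hc, -, hb⟩ := hφ
  have hc : ContDiff ℝ r φ := by exact_mod_cast hc
  have hω : ∀ y z, dist y z ≤ μ → ‖iteratedFDeriv ℝ r φ y - iteratedFDeriv ℝ r φ z‖ ≤ 2 :=
    fun y z _ => (norm_sub_le _ _).trans (by linarith [hb r le_rfl y, hb r le_rfl z])
  rw [iteratedFDeriv_sub_apply (hT.smooth k).contDiffAt (hT'.smooth k).contDiffAt]
  rcases le_or_gt k r with hk | hk
  · have e1 := hT.err μ 2 hμ hω k hk y hy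
    have e2 := hT'.err μ 2 hμ' hω k hk y hy'
    have hck : ContDiffAt ℝ k φ y := (hc.of_le (by exact_mod_cast hk)).contDiffAt
    rw [iteratedFDeriv_sub_apply hck (hT.smooth k).contDiffAt] at e1
    rw [iteratedFDeriv_sub_apply hck (hT'.smooth k).contDiffAt] at e2
    have e3 : ‖iteratedFDeriv ℝ k T y - iteratedFDeriv ℝ k T' y‖ ≤ 4 * μ ^ (r - k) := by
      have := norm_sub_le (iteratedFDeriv ℝ k φ y - iteratedFDeriv ℝ k T' y)
        (iteratedFDeriv ℝ k φ y - iteratedFDeriv ℝ k T y)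
      rw [sub_sub_sub_cancel_left] at this
      linarith
    calc _ ≤ μ ^ k * (4 * μ ^ (r - k)) := by gcongr
      _ = 4 * μ ^ r := by rw [mul_left_comm, ← pow_add]; congr 2; omega
  · rw [hT.top k hk, hT'.top k hk, sub_zero, norm_zero, mul_zero]
    positivity

lemma LocalApprox.bound {r : ℕ} {φ : Rd d → ℝ} (hφ : φ ∈ Br d r) {N : ℝ}
    {i : Fin d → ℤ} {T : Rd d → ℝ} (hT : LocalApprox r φ N i T) (hμ : 2 * d / N ≤ 1)
    {y : Rd d} (hy : y ∈ box N i) (k : ℕ) : ‖iteratedFDeriv ℝ k T y‖ ≤ 3 := by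
  obtain ⟨hc, -, hb⟩ := hφ
  have hc : ContDiff ℝ r φ := by exact_mod_cast hc
  rcases le_or_gt k r with hk | hk
  · have e1 := hT.err 1 2 hμ (fun y z _ => (norm_sub_le _ _).trans
      (by linarith [hb r le_rfl y, hb r le_rfl z])) k hk y hy
    rw [iteratedFDeriv_sub_apply (hc.of_le (by exact_mod_cast hk)).contDiffAt
      (hT.smooth k).contDiffAt, one_pow, mul_one] at e1
    have := norm_sub_le (iteratedFDeriv ℝ k φ y)
      (iteratedFDeriv ℝ k φ y - iteratedFDeriv ℝ k T y)
    rw [sub_sub_cancel] at this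
    linarith [hb k hk y]
  · rw [hT.top k hk, norm_zero]
    norm_num

lemma iteratedFDeriv_eq_zero_of_closed {g : Rd d → ℝ} {S : Set (Rd d)} (hS : IsClosed S)
    (h : ∀ y, y ∉ S → g y = 0) {y : Rd d} (hy : y ∉ S) (k : ℕ) : iteratedFDeriv ℝ k g y = 0 := by
  by_contra hne
  refine hy (closure_minimal (fun z hz => ?_) hS (support_iteratedFDeriv_subset k hne))
  by_contra hzS
  exact hz (h z hzS)

/-- The action of a functional on one piece of size `μ`: after recentring and rescaling, the piece
is a multiple of an element of `B_R`. -/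
lemma piece_bound {R : ℕ} {α M : ℝ} {L : (Rd d → ℝ) →ₗ[ℝ] ℝ} (hM : 0 ≤ M)
    (H : ∀ ψ ∈ Br d R, ∀ c ∈ closedBall (0 : Rd d) 1, ∀ μ : ℝ, 0 < μ → μ ≤ 1 →
      |L (scal ψ c μ)| ≤ M * μ ^ (-α))
    {g : Rd d → ℝ} (hg : ContDiff ℝ R g) {S : Set (Rd d)} (hS : IsClosed S) {μ A : ℝ}
    (hμ : 0 < μ) (hμ1 : μ ≤ 1) (hA : 0 < A) (hdiam : ∀ y ∈ S, ∀ z ∈ S, dist y z ≤ μ)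
    (hgS : ∀ y, y ∉ S → g y = 0) (hgU : ∀ y, y ∉ closedBall (0 : Rd d) 1 → g y = 0)
    (hb : ∀ k ≤ R, ∀ y ∈ S, μ ^ k * ‖iteratedFDeriv ℝ k g y‖ ≤ A) :
    |L g| ≤ A * μ ^ d * (M * μ ^ (-α)) := by
  by_cases hz : ∀ y, g y = 0
  · rw [show g = 0 from funext hz, map_zero, abs_zero]
    positivity
  push Not at hz
  obtain ⟨c, hc⟩ := hz
  have hcS : c ∈ S := by by_contra h; exact hc (hgS c h)
  have hcU : c ∈ closedBall (0 : Rd d) 1 := by by_contra h; exact hc (hgU c h)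
  have hgc : ContDiff ℝ R fun z => g (μ • z + c) :=
    hg.comp ((contDiff_id.const_smul μ).add contDiff_const)
  let ψ : Rd d → ℝ := A⁻¹ • fun z => g (μ • z + c)
  have hψ : ψ ∈ Br d R := by
    refine ⟨?_, ?_, fun k hk y => ?_⟩
    · have : ContDiff ℝ R ψ := contDiff_const.smul hgc
      exact_mod_cast this
    · refine closure_minimal (fun z hz => ?_) isClosed_closedBall
      have hzS : μ • z + c ∈ S := by
        by_contra h
        exact hz (by simp [ψ, hgS _ h])
      have := hdiam _ hzS _ hcS
      rw [dist_eq_norm, add_sub_cancel_right, norm_smul, Real.norm_eq_abs, abs_of_pos hμ] at this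
      rw [mem_closedBall_zero_iff]
      exact le_of_mul_le_mul_left (by linarith) hμ
    · have hkR : (k : WithTop ℕ∞) ≤ R := by exact_mod_cast hk
      rw [iteratedFDeriv_const_smul_apply (hgc.of_le hkR).contDiffAt, norm_smul,
        norm_iteratedFDeriv_affine (hg.of_le hkR), abs_of_pos hμ, norm_inv, Real.norm_eq_abs,
        abs_of_pos hA, inv_mul_le_one₀ hA]
      by_cases h : μ • y + c ∈ S
      · exact hb k hk _ h
      · rw [iteratedFDeriv_eq_zero_of_closed hS hgS h, norm_zero, mul_zero]
        exact hA.le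
  have hgψ : g = (A * μ ^ d) • scal ψ c μ := by
    funext y
    simp only [scal, ψ, Pi.smul_apply, smul_eq_mul]
    rw [smul_inv_smul₀ hμ.ne', sub_add_cancel]
    field_simp
  rw [hgψ, map_smul, smul_eq_mul, abs_mul, abs_of_pos (by positivity : 0 < A * μ ^ d)]
  have := H ψ hψ c hcU μ hμ hμ1
  gcongr

end Approximation

/-! ### Multiscale decomposition -/

section Multiscale

variable {d : ℕ}

/-- The inverse mesh size at level `n`, chosen so that cells of that level have diameter at most
`2 ^ (-n)`. -/
def mesh (d n : ℕ) : ℕ := 2 * d * 2 ^ n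

lemma mesh_pos (hd : 1 ≤ d) (n : ℕ) : (0 : ℝ) < mesh d n := by
  unfold mesh
  exact_mod_cast (by positivity : 0 < 2 * d * 2 ^ n)

lemma two_mul_div_mesh (hd : 1 ≤ d) (n : ℕ) : 2 * (d : ℝ) / mesh d n = (1 / 2) ^ n := by
  have : (d : ℝ) ≠ 0 := by exact_mod_cast (by omega : d ≠ 0)
  unfold mesh
  push_cast
  rw [one_div, inv_pow]
  field_simp

/-- The local approximations `T i` at level `n`, glued by the partition of unity of that level. -/
def glue (n : ℕ) (T : (Fin d → ℤ) → Rd d → ℝ) : Rd d → ℝ :=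
  ∑ i ∈ idx d (mesh d n), fun y => cut (mesh d n) i y * T i y

lemma glue_apply (n : ℕ) (T : (Fin d → ℤ) → Rd d → ℝ) (y : Rd d) :
    glue n T y = ∑ i ∈ idx d (mesh d n), cut (mesh d n) i y * T i y := by
  simp [glue]

lemma LocalApprox.cut_mul_eq_zero {r : ℕ} {φ : Rd d → ℝ} {N : ℝ} {i : Fin d → ℤ} {T : Rd d → ℝ}
    (hT : LocalApprox r φ N i T) {y : Rd d} (hy : y ∉ closedBall (0 : Rd d) 1) :
    cut N i y * T y = 0 := by
  by_cases h : y ∈ box N i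
  · rw [hT.vanish y h hy, mul_zero]
  · rw [cut_eq_zero h, zero_mul]

lemma cut_scaled (hd : 1 ≤ d) {R : ℕ} {Θ : ℝ} (hΘ0 : 0 ≤ Θ)
    (hΘ : ∀ k ≤ R, ∀ z : Rd d, ‖iteratedFDeriv ℝ k chi z‖ ≤ Θ) {m n : ℕ} (hmn : m ≤ n + 1)
    (i : Fin d → ℤ) {k : ℕ} (hk : k ≤ R) (y : Rd d) :
    ((1 / 2 : ℝ) ^ n) ^ k * ‖iteratedFDeriv ℝ k (cut (mesh d m) i) y‖ ≤ (4 * d) ^ R * Θ := by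
  have h := norm_iteratedFDeriv_cut hΘ (mesh_pos hd m).le i hk y
  have hd' : (1 : ℝ) ≤ d := by exact_mod_cast hd
  have h1 : (1 / 2 : ℝ) ^ n * mesh d m ≤ 4 * d := by
    unfold mesh
    push_cast
    have : (2 : ℝ) ^ m ≤ 2 ^ (n + 1) := pow_le_pow_right₀ (by norm_num) hmn
    calc (1 / 2 : ℝ) ^ n * (2 * d * 2 ^ m) ≤ (1 / 2 : ℝ) ^ n * (2 * d * 2 ^ (n + 1)) := by gcongr
      _ = 4 * d := by
        rw [pow_succ, one_div, inv_pow]; field_simp; norm_num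
  calc ((1 / 2 : ℝ) ^ n) ^ k * ‖iteratedFDeriv ℝ k (cut (mesh d m) i) y‖
      ≤ ((1 / 2 : ℝ) ^ n) ^ k * ((mesh d m : ℝ) ^ k * Θ) := by gcongr
    _ = ((1 / 2 : ℝ) ^ n * mesh d m) ^ k * Θ := by rw [mul_pow]; ring
    _ ≤ (4 * d) ^ k * Θ := by gcongr
    _ ≤ (4 * d) ^ R * Θ := by gcongr; linarith

lemma glue_base (hd : 1 ≤ d) {r R : ℕ} {Θ α M : ℝ} (hΘ1 : 1 ≤ Θ)
    (hΘ : ∀ k ≤ R, ∀ z : Rd d, ‖iteratedFDeriv ℝ k chi z‖ ≤ Θ)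
    {L : (Rd d → ℝ) →ₗ[ℝ] ℝ} (hM : 0 ≤ M)
    (H : ∀ ψ ∈ Br d R, ∀ c ∈ closedBall (0 : Rd d) 1, ∀ μ : ℝ, 0 < μ → μ ≤ 1 →
      |L (scal ψ c μ)| ≤ M * μ ^ (-α))
    {φ : Rd d → ℝ} (hφ : φ ∈ Br d r) {T : (Fin d → ℤ) → Rd d → ℝ}
    (hT : ∀ i, LocalApprox r φ (mesh d 0) i (T i)) :
    |L (glue 0 T)| ≤ (4 * d + 1) ^ d * (2 ^ R * ((4 * d) ^ R * Θ * 3)) * M := by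
  have hd' : (1 : ℝ) ≤ d := by exact_mod_cast hd
  have hdiv := two_mul_div_mesh hd 0
  rw [pow_zero] at hdiv
  have hone : ∀ i, |L fun y => cut (mesh d 0) i y * T i y| ≤
      2 ^ R * ((4 * d) ^ R * Θ * 3) * M := by
    intro i
    have := piece_bound (μ := 1) (A := 2 ^ R * ((4 * d) ^ R * Θ * 3)) hM H
      ((cut_contDiff R (mesh d 0) i).mul ((hT i).smooth R)) (isClosed_box (mesh d 0) i)
      one_pos le_rfl (by positivity)
      (fun y hy z hz => (box_dist (mesh_pos hd 0) hy hz).trans hdiv.le)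
      (fun y hy => by simp [cut_eq_zero hy]) (fun y hy => (hT i).cut_mul_eq_zero hy)
      (fun k hk y hy => ?_)
    · simpa using this
    · have h1 := norm_iteratedFDeriv_mul_scaled (k := k) (cut_contDiff k (mesh d 0) i)
        ((hT i).smooth k) (μ := 1) (a := (4 * d) ^ R * Θ) (b := 3) (y := y) zero_le_one
        (by positivity)
        (fun j hj => by
          simpa using cut_scaled hd (by linarith) hΘ (Nat.zero_le (0 + 1)) i (hj.trans hk) y)
        (fun j hj => by simpa using (hT i).bound hφ hdiv.le hy j)
      refine h1.trans ?_
      gcongr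
      norm_num
  have hcard : ((idx d (mesh d 0)).card : ℝ) = (4 * d + 1) ^ d := by
    rw [card_idx, mesh]; push_cast; ring
  rw [glue, map_sum]
  calc _ ≤ ∑ i ∈ idx d (mesh d 0), |L fun y => cut (mesh d 0) i y * T i y| :=
        Finset.abs_sum_le_sum_abs _ _
    _ ≤ ∑ _i ∈ idx d (mesh d 0), 2 ^ R * ((4 * d) ^ R * Θ * 3) * M :=
        Finset.sum_le_sum fun i _ => hone i
    _ = _ := by rw [Finset.sum_const, nsmul_eq_mul, hcard]; ring

/-- Difference of two consecutive levels, refined over pairs of cells. On the support of each summand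
both local approximations are close to `φ`, hence to each other. -/
lemma glue_sub (n : ℕ) {r : ℕ} {φ : Rd d → ℝ} {T T' : (Fin d → ℤ) → Rd d → ℝ}
    (hT : ∀ i, LocalApprox r φ (mesh d (n + 1)) i (T i))
    (hT' : ∀ i, LocalApprox r φ (mesh d n) i (T' i)) :
    glue (n + 1) T - glue n T' = ∑ i ∈ idx d (mesh d (n + 1)), ∑ j ∈ idx d (mesh d n),
      fun y => cut (mesh d (n + 1)) i y * (cut (mesh d n) j y * (T i - T' j) y) := by
  funext y
  rw [Pi.sub_apply, glue_apply, glue_apply]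
  simp only [Finset.sum_apply, Pi.sub_apply]
  by_cases hy : y ∈ closedBall (0 : Rd d) 1
  · have e1 := sum_cut (M := mesh d n) hy
    have e2 := sum_cut (M := mesh d (n + 1)) hy
    simp only [mul_sub, Finset.sum_sub_distrib]
    congr 1
    · refine Finset.sum_congr rfl fun i _ => ?_
      rw [← Finset.mul_sum, ← Finset.sum_mul, e1, one_mul]
    · rw [← Finset.sum_mul_sum, e2, one_mul]
  · rw [Finset.sum_eq_zero fun i _ => (hT i).cut_mul_eq_zero hy,
      Finset.sum_eq_zero fun i _ => (hT' i).cut_mul_eq_zero hy, sub_zero]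
    refine (Finset.sum_eq_zero fun i _ => Finset.sum_eq_zero fun j _ => ?_).symm
    have h1 := (hT i).cut_mul_eq_zero hy
    have h2 := (hT' j).cut_mul_eq_zero hy
    linear_combination cut (mesh d n) j y * h1 - cut (mesh d (n + 1)) i y * h2

/-- One step of the telescoping sum. At scale `μ = 2 ^ (-n)` there are of the order of `μ ^ (-d)`
nonzero pieces, and `L` is of the order of `μ ^ (r + d - α)` on each of them. -/
lemma glue_step (hd : 1 ≤ d) {r R : ℕ} {Θ α M : ℝ} (hΘ1 : 1 ≤ Θ)
    (hΘ : ∀ k ≤ R, ∀ z : Rd d, ‖iteratedFDeriv ℝ k chi z‖ ≤ Θ)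
    {L : (Rd d → ℝ) →ₗ[ℝ] ℝ} (hM : 0 ≤ M)
    (H : ∀ ψ ∈ Br d R, ∀ c ∈ closedBall (0 : Rd d) 1, ∀ μ : ℝ, 0 < μ → μ ≤ 1 →
      |L (scal ψ c μ)| ≤ M * μ ^ (-α))
    {φ : Rd d → ℝ} (hφ : φ ∈ Br d r) (n : ℕ) {T T' : (Fin d → ℤ) → Rd d → ℝ}
    (hT : ∀ i, LocalApprox r φ (mesh d (n + 1)) i (T i))
    (hT' : ∀ i, LocalApprox r φ (mesh d n) i (T' i)) :
    |L (glue (n + 1) T) - L (glue n T')| ≤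
      ((8 * d + 1) * 5) ^ d * (2 ^ R * ((4 * d) ^ R * Θ * (2 ^ R * ((4 * d) ^ R * Θ * 4)))) * M *
        ((1 / 2 : ℝ) ^ ((r : ℝ) - α)) ^ n := by
  classical
  have hd' : (1 : ℝ) ≤ d := by exact_mod_cast hd
  set μ : ℝ := (1 / 2) ^ n with hμdef
  have hμ0 : 0 < μ := by positivity
  have hμ1 : μ ≤ 1 := pow_le_one₀ (by norm_num) (by norm_num)
  have hdiv : 2 * (d : ℝ) / mesh d n ≤ μ := (two_mul_div_mesh hd n).le
  have hdiv' : 2 * (d : ℝ) / mesh d (n + 1) ≤ μ := by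
    rw [two_mul_div_mesh hd (n + 1), pow_succ]; linarith
  set A₀ : ℝ := 2 ^ R * ((4 * d) ^ R * Θ * (2 ^ R * ((4 * d) ^ R * Θ * 4))) with hA₀
  set p : (Fin d → ℤ) → (Fin d → ℤ) → Rd d → ℝ := fun i j y =>
    cut (mesh d (n + 1)) i y * (cut (mesh d n) j y * (T i - T' j) y) with hp
  have hpS : ∀ i j y, y ∉ box (mesh d (n + 1)) i ∩ box (mesh d n) j → p i j y = 0 := by
    intro i j y hy
    rw [mem_inter_iff, not_and_or] at hy
    rcases hy with hy | hy
    · simp [hp, cut_eq_zero hy]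
    · simp [hp, cut_eq_zero hy]
  have hone : ∀ i j, |L (p i j)| ≤ A₀ * μ ^ r * μ ^ d * (M * μ ^ (-α)) := by
    intro i j
    have hsm : ∀ k : ℕ, ContDiff ℝ k (T i - T' j) := fun k => ((hT i).smooth k).sub
      ((hT' j).smooth k)
    have hsm' : ∀ k : ℕ, ContDiff ℝ k fun y => cut (mesh d n) j y * (T i - T' j) y := fun k =>
      (cut_contDiff k _ j).mul (hsm k)
    refine piece_bound (S := box (mesh d (n + 1)) i ∩ box (mesh d n) j) hM H
      ((cut_contDiff R _ i).mul (hsm' R)) ((isClosed_box _ i).inter (isClosed_box _ j))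
      hμ0 hμ1 (by positivity) (fun y hy z hz => (box_dist (mesh_pos hd n) hy.2 hz.2).trans hdiv)
      (hpS i j) (fun y hy => ?_) (fun k hk y hy => ?_)
    · have h1 := (hT i).cut_mul_eq_zero hy
      have h2 := (hT' j).cut_mul_eq_zero hy
      simp only [Pi.sub_apply]
      linear_combination cut (mesh d n) j y * h1 - cut (mesh d (n + 1)) i y * h2
    · have h1 : ∀ l ≤ k, μ ^ l * ‖iteratedFDeriv ℝ l
          (fun y => cut (mesh d n) j y * (T i - T' j) y) y‖ ≤
          2 ^ R * ((4 * d) ^ R * Θ * (4 * μ ^ r)) := by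
        intro l hl
        refine (norm_iteratedFDeriv_mul_scaled (cut_contDiff l _ j) (hsm l) hμ0.le (by positivity)
          (fun m hm => cut_scaled hd (by linarith) hΘ n.le_succ j (by omega) y)
          (fun m _ => (hT i).diff_bound hφ (hT' j) hμ0.le hdiv' hdiv hy.1 hy.2 m)).trans ?_
        gcongr
        · norm_num
        · omega
      refine (norm_iteratedFDeriv_mul_scaled (cut_contDiff k _ i) (hsm' k) hμ0.le (by positivity)
        (fun m hm => cut_scaled hd (by linarith) hΘ le_rfl i (by omega) y) h1).trans ?_
      calc _ ≤ 2 ^ R * ((4 * d) ^ R * Θ * (2 ^ R * ((4 * d) ^ R * Θ * (4 * μ ^ r)))) := by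
            gcongr
            norm_num
        _ = A₀ * μ ^ r := by rw [hA₀]; ring
  have hinner : ∀ i, |∑ j ∈ idx d (mesh d n), L (p i j)| ≤
      5 ^ d * (A₀ * μ ^ r * μ ^ d * (M * μ ^ (-α))) := by
    intro i
    -- cells of the coarse level meeting the fine cell `i` have index close to `i / 2`
    have hfilter : ∀ j ∈ idx d (mesh d n), |L (p i j)| ≠ 0 →
        ∀ a, |(i a : ℝ) / 2 - j a| ≤ 2 := by
      intro j _ hne a
      by_contra hfar
      refine hne ?_
      have : p i j = 0 := by
        funext y
        refine hpS i j y fun hy => hfar ?_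
        have h1 := abs_le.1 (hy.1 a)
        have h2 := abs_le.1 (hy.2 a)
        have h3 : (mesh d (n + 1) : ℝ) = 2 * mesh d n := by
          unfold mesh; push_cast; ring
        rw [h3] at h1
        exact abs_le.2 ⟨by linarith, by linarith⟩
      rw [this, map_zero, abs_zero]
    calc |∑ j ∈ idx d (mesh d n), L (p i j)| ≤ ∑ j ∈ idx d (mesh d n), |L (p i j)| :=
          Finset.abs_sum_le_sum_abs _ _
      _ = ∑ j ∈ (idx d (mesh d n)).filter fun j => ∀ a, |(i a : ℝ) / 2 - j a| ≤ 2,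
            |L (p i j)| := (Finset.sum_filter_of_ne hfilter).symm
      _ ≤ ∑ _j ∈ (idx d (mesh d n)).filter fun j => ∀ a, |(i a : ℝ) / 2 - j a| ≤ 2,
            A₀ * μ ^ r * μ ^ d * (M * μ ^ (-α)) := Finset.sum_le_sum fun j _ => hone i j
      _ ≤ 5 ^ d * (A₀ * μ ^ r * μ ^ d * (M * μ ^ (-α))) := by
          rw [Finset.sum_const, nsmul_eq_mul]
          gcongr
          exact_mod_cast card_close_le (idx d (mesh d n)) fun a => (i a : ℝ) / 2
  have hcard : ((idx d (mesh d (n + 1))).card : ℝ) * μ ^ d ≤ (8 * d + 1) ^ d := by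
    rw [card_idx]
    push_cast
    rw [← mul_pow]
    gcongr
    have : (mesh d (n + 1) : ℝ) * μ = 4 * d := by
      rw [mesh, hμdef, one_div, inv_pow]; push_cast; rw [pow_succ]; field_simp; norm_num
    linarith
  have hrpow : μ ^ r * μ ^ (-α) = ((1 / 2 : ℝ) ^ ((r : ℝ) - α)) ^ n := by
    rw [← Real.rpow_natCast μ r, ← Real.rpow_add hμ0, ← sub_eq_add_neg, hμdef,
      ← Real.rpow_natCast, ← Real.rpow_natCast, ← Real.rpow_mul (by norm_num),
      ← Real.rpow_mul (by norm_num), mul_comm]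
  rw [← map_sub, glue_sub n hT hT', map_sum]
  simp only [map_sum]
  calc _ ≤ ∑ i ∈ idx d (mesh d (n + 1)), |∑ j ∈ idx d (mesh d n), L (p i j)| :=
        Finset.abs_sum_le_sum_abs _ _
    _ ≤ ∑ _i ∈ idx d (mesh d (n + 1)), 5 ^ d * (A₀ * μ ^ r * μ ^ d * (M * μ ^ (-α))) :=
        Finset.sum_le_sum fun i _ => hinner i
    _ = ((idx d (mesh d (n + 1))).card * μ ^ d) * (5 ^ d * A₀ * M * (μ ^ r * μ ^ (-α))) := by
        rw [Finset.sum_const, nsmul_eq_mul]; ring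
    _ ≤ (8 * d + 1) ^ d * (5 ^ d * A₀ * M * (μ ^ r * μ ^ (-α))) := by gcongr
    _ = _ := by rw [hrpow, mul_pow]; ring

/-- The glued approximations converge to `φ` in `C^r`, at the rate of the modulus of continuity of
the top derivative. -/
lemma glue_err (hd : 1 ≤ d) {r : ℕ} {Θ : ℝ} (hΘ1 : 1 ≤ Θ)
    (hΘ : ∀ k ≤ r, ∀ z : Rd d, ‖iteratedFDeriv ℝ k chi z‖ ≤ Θ)
    {φ : Rd d → ℝ} (hφ : φ ∈ Br d r) (n : ℕ) {T : (Fin d → ℤ) → Rd d → ℝ}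
    (hT : ∀ i, LocalApprox r φ (mesh d n) i (T i)) :
    ContDiff ℝ r (φ - glue n T) ∧ tsupport (φ - glue n T) ⊆ closedBall (0 : Rd d) 1 ∧
    ∀ ω : ℝ, 0 ≤ ω → (∀ y z, dist y z ≤ (1 / 2 : ℝ) ^ n →
      ‖iteratedFDeriv ℝ r φ y - iteratedFDeriv ℝ r φ z‖ ≤ ω) →
      ∀ k ≤ r, ∀ y, ‖iteratedFDeriv ℝ k (φ - glue n T) y‖ ≤
        5 ^ d * (2 ^ r * ((4 * d) ^ r * Θ)) * ω := by
  classical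
  have hd' : (1 : ℝ) ≤ d := by exact_mod_cast hd
  have hc : ContDiff ℝ r φ := by exact_mod_cast hφ.1
  have hout : ∀ y, y ∉ closedBall (0 : Rd d) 1 → φ y = 0 := fun y hy => by
    by_contra h
    exact hy (hφ.2.1 (subset_tsupport _ h))
  have hsum : φ - glue n T = ∑ i ∈ idx d (mesh d n),
      fun y => cut (mesh d n) i y * (φ - T i) y := by
    funext y
    rw [Pi.sub_apply, glue_apply]
    simp only [Finset.sum_apply, Pi.sub_apply, mul_sub, Finset.sum_sub_distrib]
    congr 1
    rw [← Finset.sum_mul]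
    by_cases hy : y ∈ closedBall (0 : Rd d) 1
    · rw [sum_cut hy, one_mul]
    · rw [hout y hy, mul_zero]
  have hsm : ∀ i, ContDiff ℝ r fun y => cut (mesh d n) i y * (φ - T i) y := fun i =>
    (cut_contDiff r _ i).mul (hc.sub ((hT i).smooth r))
  refine ⟨?_, ?_, fun ω hω0 hω k hk y => ?_⟩
  · rw [hsum]
    have := ContDiff.sum (s := idx d (mesh d n)) fun i _ => hsm i
    convert this using 1
    funext y
    simp
  · refine closure_minimal (fun y hy => ?_) isClosed_closedBall
    by_contra hyU
    refine hy ?_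
    rw [Pi.sub_apply, glue_apply, hout y hyU,
      Finset.sum_eq_zero fun i _ => (hT i).cut_mul_eq_zero hyU, sub_zero]
  · set μ : ℝ := (1 / 2) ^ n with hμdef
    have hμ0 : 0 < μ := by positivity
    have hμ1 : μ ≤ 1 := pow_le_one₀ (by norm_num) (by norm_num)
    have hkr : (k : WithTop ℕ∞) ≤ r := by exact_mod_cast hk
    have hone : ∀ i, ‖iteratedFDeriv ℝ k (fun y => cut (mesh d n) i y * (φ - T i) y) y‖ ≤
        2 ^ r * ((4 * d) ^ r * Θ) * ω := by
      intro i
      by_cases hy : y ∈ box (mesh d n) i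
      · have h1 := norm_iteratedFDeriv_mul_scaled (k := k) (cut_contDiff k (mesh d n) i)
          ((hc.of_le hkr).sub ((hT i).smooth k)) (b := ω * μ ^ r) hμ0.le
          (by positivity : 0 ≤ (4 * (d : ℝ)) ^ r * Θ)
          (fun m hm => cut_scaled hd (by linarith) hΘ n.le_succ i (by omega) y)
          (fun m hm => by
            have := (hT i).err μ ω (two_mul_div_mesh hd n).le hω m (by omega) y hy
            calc _ ≤ μ ^ m * (ω * μ ^ (r - m)) := by gcongr; exact this
              _ = ω * μ ^ r := by rw [mul_left_comm, ← pow_add]; congr 2; omega)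
        have h2 : μ ^ k * ‖iteratedFDeriv ℝ k (fun y => cut (mesh d n) i y * (φ - T i) y) y‖ ≤
            μ ^ k * (2 ^ r * ((4 * d) ^ r * Θ) * ω) := by
          refine h1.trans ?_
          calc _ ≤ 2 ^ r * ((4 * d) ^ r * Θ * (ω * μ ^ k)) := by
                have : μ ^ r ≤ μ ^ k := pow_le_pow_of_le_one hμ0.le hμ1 hk
                gcongr
                norm_num
            _ = _ := by ring
        exact le_of_mul_le_mul_left h2 (by positivity)
      · rw [iteratedFDeriv_eq_zero_of_closed (isClosed_box (mesh d n) i)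
          (fun z hz => by simp [cut_eq_zero hz]) hy, norm_zero]
        positivity
    have hfilter : ∀ i ∈ idx d (mesh d n),
        ‖iteratedFDeriv ℝ k (fun y => cut (mesh d n) i y * (φ - T i) y) y‖ ≠ 0 →
        ∀ a, |(mesh d n : ℝ) * y a - i a| ≤ 2 := by
      intro i _ hne a
      have hy : y ∈ box (mesh d n) i := by
        by_contra hy
        refine hne ?_
        rw [iteratedFDeriv_eq_zero_of_closed (isClosed_box (mesh d n) i)
          (fun z hz => by simp [cut_eq_zero hz]) hy, norm_zero]
      linarith [hy a]
    rw [hsum, iteratedFDeriv_sum_apply fun i _ => ((hsm i).of_le hkr).contDiffAt]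
    calc _ ≤ ∑ i ∈ idx d (mesh d n),
          ‖iteratedFDeriv ℝ k (fun y => cut (mesh d n) i y * (φ - T i) y) y‖ :=
          norm_sum_le _ _
      _ = ∑ i ∈ (idx d (mesh d n)).filter fun i => ∀ a, |(mesh d n : ℝ) * y a - i a| ≤ 2,
          ‖iteratedFDeriv ℝ k (fun y => cut (mesh d n) i y * (φ - T i) y) y‖ :=
          (Finset.sum_filter_of_ne hfilter).symm
      _ ≤ ∑ _i ∈ (idx d (mesh d n)).filter fun i => ∀ a, |(mesh d n : ℝ) * y a - i a| ≤ 2,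
          2 ^ r * ((4 * d) ^ r * Θ) * ω := Finset.sum_le_sum fun i _ => hone i
      _ ≤ 5 ^ d * (2 ^ r * ((4 * d) ^ r * Θ) * ω) := by
          rw [Finset.sum_const, nsmul_eq_mul]
          gcongr
          exact_mod_cast card_close_le (idx d (mesh d n)) fun a => (mesh d n : ℝ) * y a
      _ = _ := by ring

end Multiscale

/-! ### Comparison of the two bounds -/

section Comparison

variable {d : ℕ}

/-- The core estimate: a functional which is bounded on rescaled elements of `B_R` near the unit
ball, and continuous in the `C^r` topology, is bounded on `B_r`. The bound does not involve the
constant `C₀` of the continuity estimate, which only serves to pass to the limit. -/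
lemma exists_core_bound (hd : 1 ≤ d) {r R : ℕ} (hrR : r ≤ R) {α : ℝ} (hr : α < r) :
    ∃ C : ℝ, 0 ≤ C ∧ ∀ (L : (Rd d → ℝ) →ₗ[ℝ] ℝ) (M : ℝ), 0 ≤ M →
      (∀ ψ ∈ Br d R, ∀ c ∈ closedBall (0 : Rd d) 1, ∀ μ : ℝ, 0 < μ → μ ≤ 1 →
        |L (scal ψ c μ)| ≤ M * μ ^ (-α)) →
      (∃ C₀ : ℝ, ∀ h : Rd d → ℝ, ContDiff ℝ r h → tsupport h ⊆ closedBall (0 : Rd d) 1 →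
        ∀ B : ℝ, (∀ k ≤ r, ∀ y, ‖iteratedFDeriv ℝ k h y‖ ≤ B) → |L h| ≤ C₀ * B) →
      ∀ φ ∈ Br d r, |L φ| ≤ C * M := by
  obtain ⟨Θ, hΘ1, hΘ⟩ := exists_chi_bound d R
  have hd' : (1 : ℝ) ≤ d := by exact_mod_cast hd
  set K₀ : ℝ := (4 * d + 1) ^ d * (2 ^ R * ((4 * d) ^ R * Θ * 3)) with hK₀
  set K₁ : ℝ := ((8 * d + 1) * 5) ^ d *
    (2 ^ R * ((4 * d) ^ R * Θ * (2 ^ R * ((4 * d) ^ R * Θ * 4)))) with hK₁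
  set q : ℝ := (1 / 2) ^ ((r : ℝ) - α) with hq
  have hq0 : 0 ≤ q := by positivity
  have hq1 : q < 1 := Real.rpow_lt_one (by norm_num) (by norm_num) (by linarith)
  have hK₀0 : 0 ≤ K₀ := by positivity
  have hK₁0 : 0 ≤ K₁ := by positivity
  refine ⟨K₀ + K₁ * (1 - q)⁻¹, by have := sub_pos.2 hq1; positivity,
    fun L M hM H1 ⟨C₀, H2⟩ φ hφ => ?_⟩
  choose T hT using fun n : ℕ => fun i => exists_localApprox hφ (mesh_pos hd n) i
  have hS : ∀ n, |L (glue n (T n))| ≤ K₀ * M + K₁ * M * ∑ m ∈ Finset.range n, q ^ m := by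
    intro n
    induction n with
    | zero => simpa using glue_base hd hΘ1 hΘ hM H1 hφ (hT 0)
    | succ n ih =>
      have h1 := glue_step hd hΘ1 hΘ hM H1 hφ n (hT (n + 1)) (hT n)
      have h2 := abs_sub_abs_le_abs_sub (L (glue (n + 1) (T (n + 1)))) (L (glue n (T n)))
      rw [Finset.sum_range_succ, mul_add]
      linarith
  have hS' : ∀ n, |L (glue n (T n))| ≤ (K₀ + K₁ * (1 - q)⁻¹) * M := by
    intro n
    have h1 : ∑ m ∈ Finset.range n, q ^ m ≤ (1 - q)⁻¹ := by
      rw [← tsum_geometric_of_lt_one hq0 hq1]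
      exact (summable_geometric_of_lt_one hq0 hq1).sum_le_tsum _ fun m _ => by positivity
    calc _ ≤ K₀ * M + K₁ * M * ∑ m ∈ Finset.range n, q ^ m := hS n
      _ ≤ K₀ * M + K₁ * M * (1 - q)⁻¹ := by gcongr
      _ = _ := by ring
  have hc : ContDiff ℝ r φ := by exact_mod_cast hφ.1
  have hcs : HasCompactSupport φ :=
    (isCompact_closedBall (0 : Rd d) 1).of_isClosed_subset (isClosed_tsupport _) hφ.2.1
  have huc : UniformContinuous (iteratedFDeriv ℝ r φ) :=
    (hcs.iteratedFDeriv (𝕜 := ℝ) r).uniformContinuous_of_continuous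
      (hc.continuous_iteratedFDeriv le_rfl)
  set c : ℝ := |C₀| * (5 ^ d * (2 ^ r * ((4 * d) ^ r * Θ))) with hcdef
  have hc0 : 0 ≤ c := by positivity
  refine le_of_forall_pos_le_add fun ε hε => ?_
  have hω0 : 0 < ε / (c + 1) := by positivity
  obtain ⟨δ, hδ, hδ'⟩ := Metric.uniformContinuous_iff.1 huc _ hω0
  obtain ⟨n, hn⟩ := exists_pow_lt_of_lt_one hδ (by norm_num : (1 / 2 : ℝ) < 1)
  obtain ⟨g1, g2, g3⟩ := glue_err hd hΘ1 (fun k hk => hΘ k (hk.trans hrR)) hφ n (hT n)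
  have g4 := g3 _ hω0.le fun y z hyz => by
    have := hδ' (lt_of_le_of_lt hyz hn)
    rw [dist_eq_norm] at this
    exact this.le
  have g5 := H2 _ g1 g2 _ g4
  have g6 : |L (φ - glue n (T n))| ≤ ε := by
    have hB : 0 ≤ 5 ^ d * (2 ^ r * ((4 * (d : ℝ)) ^ r * Θ)) * (ε / (c + 1)) := by positivity
    calc _ ≤ |C₀| * (5 ^ d * (2 ^ r * ((4 * (d : ℝ)) ^ r * Θ)) * (ε / (c + 1))) :=
          g5.trans (mul_le_mul_of_nonneg_right (le_abs_self _) hB)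
      _ = ε * (c / (c + 1)) := by rw [hcdef]; ring
      _ ≤ ε := mul_le_of_le_one_right hε.le ((div_le_one (by linarith)).2 (by linarith))
  rw [map_sub] at g6
  have := abs_sub_abs_le_abs_sub (L φ) (L (glue n (T n)))
  linarith [hS' n]

lemma scal_scal (ψ : Rd d → ℝ) (c x : Rd d) (μ : ℝ) {l : ℝ} (hl : 0 < l) :
    scal (scal ψ c μ) x l = scal ψ (x + l • c) (l * μ) := by
  funext y
  simp only [scal]
  have : μ⁻¹ • (l⁻¹ • (y - x) - c) = (l * μ)⁻¹ • (y - (x + l • c)) := by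
    rw [mul_inv, mul_comm l⁻¹, mul_smul, ← sub_sub, smul_sub l⁻¹ (y - x), inv_smul_smul₀ hl.ne']
  rw [this, mul_pow, mul_inv (l ^ d), mul_assoc]

/-- Rescaling as a linear map on test functions. -/
def scalLin (x : Rd d) (l : ℝ) : (Rd d → ℝ) →ₗ[ℝ] (Rd d → ℝ) where
  toFun h := scal h x l
  map_add' f g := by funext y; simp only [scal, Pi.add_apply]; ring
  map_smul' a f := by
    funext y; simp only [scal, Pi.smul_apply, smul_eq_mul, RingHom.id_apply]; ring

lemma scal_contDiff {m : ℕ} {h : Rd d → ℝ} (hh : ContDiff ℝ m h) (x : Rd d) (l : ℝ) :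
    ContDiff ℝ m (scal h x l) :=
  contDiff_const.mul (hh.comp ((contDiff_id.sub contDiff_const).const_smul _))

lemma tsupport_scal {h : Rd d → ℝ} (hh : tsupport h ⊆ closedBall (0 : Rd d) 1) (x : Rd d) {l : ℝ}
    (hl : 0 < l) : tsupport (scal h x l) ⊆ closedBall x l := by
  refine closure_minimal (fun y hy => ?_) isClosed_closedBall
  have h1 : h (l⁻¹ • (y - x)) ≠ 0 := fun h0 => hy (by simp [scal, h0])
  have h2 := hh (subset_tsupport _ h1)
  rw [mem_closedBall_zero_iff, norm_smul, norm_inv, Real.norm_eq_abs, abs_of_pos hl,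
    inv_mul_le_one₀ hl] at h2
  rwa [mem_closedBall, dist_eq_norm]

lemma norm_iteratedFDeriv_scal {k : ℕ} {h : Rd d → ℝ} (hh : ContDiff ℝ k h) (x : Rd d) {l : ℝ}
    (hl : 0 < l) (y : Rd d) :
    ‖iteratedFDeriv ℝ k (scal h x l) y‖ =
      (l ^ d)⁻¹ * ((l⁻¹) ^ k * ‖iteratedFDeriv ℝ k h (l⁻¹ • (y - x))‖) := by
  have e : scal h x l = (l ^ d)⁻¹ • fun y => h (l⁻¹ • y + -(l⁻¹ • x)) := by
    funext y; rw [scal, smul_sub, sub_eq_add_neg]; rfl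
  have hc : ContDiff ℝ k fun y => h (l⁻¹ • y + -(l⁻¹ • x)) :=
    hh.comp ((contDiff_id.const_smul _).add contDiff_const)
  rw [e, iteratedFDeriv_const_smul_apply hc.contDiffAt, norm_smul, norm_iteratedFDeriv_affine hh,
    Real.norm_eq_abs, abs_of_pos (by positivity), abs_of_pos (by positivity), smul_sub,
    sub_eq_add_neg]

lemma zero_mem_Br (d r : ℕ) : (0 : Rd d → ℝ) ∈ Br d r :=
  ⟨contDiff_const, by simp, fun i _ y => by simp⟩

lemma Br_anti {r R : ℕ} (h : r ≤ R) : Br d R ⊆ Br d r := fun _ hφ =>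
  ⟨hφ.1.of_le (by exact_mod_cast h), hφ.2.1, fun i hi => hφ.2.2 i (hi.trans h)⟩

lemma NegBoundOn.nonneg {r : ℕ} {α C : ℝ} {η : (Rd d → ℝ) →ₗ[ℝ] ℝ} {K : Set (Rd d)}
    (h : NegBoundOn r α η K C) {x : Rd d} (hx : x ∈ K) : 0 ≤ C := by
  have := (abs_nonneg _).trans (h 0 (zero_mem_Br d r) x hx 1 one_pos le_rfl)
  simpa using this

lemma NegBoundOn.of_le {r R : ℕ} (hrR : r ≤ R) {α C : ℝ} {η : (Rd d → ℝ) →ₗ[ℝ] ℝ}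
    {K : Set (Rd d)} (h : NegBoundOn r α η (Metric.cthickening 1 K) C) {C' : ℝ} (hC' : 1 ≤ C') :
    NegBoundOn R α η K (C' * C) := by
  intro φ hφ x hx l hl hl1
  have hx' : x ∈ Metric.cthickening 1 K := Metric.self_subset_cthickening K hx
  have hC := h.nonneg hx'
  refine (h φ (Br_anti hrR hφ) x hx' l hl hl1).trans ?_
  gcongr
  exact le_mul_of_one_le_left hC hC'

/-- Passing from smoother to rougher test functions: for fixed `x` and `l` the core estimate is
applied to `h ↦ η (h_x^l)`. -/
lemma exists_negBoundOn (hd : 1 ≤ d) {r R : ℕ} (hrR : r ≤ R) {α : ℝ} (hr : α < r) :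
    ∃ C' : ℝ, 1 ≤ C' ∧ ∀ η : (Rd d → ℝ) →ₗ[ℝ] ℝ, CmContinuous r η →
      ∀ (K : Set (Rd d)) (C : ℝ), NegBoundOn R α η (Metric.cthickening 1 K) C →
        NegBoundOn r α η K (C' * C) := by
  obtain ⟨C', hC'0, hC'⟩ := exists_core_bound hd hrR hr
  refine ⟨C' + 1, by linarith, fun η hη K C h φ hφ x hx l hl hl1 => ?_⟩
  have hC := h.nonneg (Metric.self_subset_cthickening K hx)
  have key := hC' (η ∘ₗ scalLin x l) (C * l ^ (-α)) (by positivity) ?_ ?_ φ hφ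
  · calc |η (scal φ x l)| ≤ C' * (C * l ^ (-α)) := key
      _ ≤ (C' + 1) * (C * l ^ (-α)) := by gcongr; linarith
      _ = _ := by ring
  · intro ψ hψ c hc μ hμ hμ1
    change |η (scal (scal ψ c μ) x l)| ≤ _
    rw [scal_scal ψ c x μ hl]
    have hmem : x + l • c ∈ Metric.cthickening 1 K := by
      refine Metric.mem_cthickening_of_dist_le _ x 1 K hx ?_
      rw [dist_eq_norm, add_sub_cancel_left, norm_smul, Real.norm_eq_abs, abs_of_pos hl]
      exact mul_le_one₀ hl1 (norm_nonneg _) (by simpa using hc)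
    refine (h ψ hψ _ hmem (l * μ) (by positivity) (mul_le_one₀ hl1 hμ.le hμ1)).trans_eq ?_
    rw [Real.mul_rpow hl.le hμ.le, mul_assoc]
  · obtain ⟨C₁, hC₁⟩ := hη (closedBall x l) (isCompact_closedBall x l)
    refine ⟨C₁ * ((l ^ d)⁻¹ * (l⁻¹) ^ r), fun g hg hgs B hB => ?_⟩
    have hts := tsupport_scal hgs x hl
    have hB0 : 0 ≤ B := (norm_nonneg _).trans (hB 0 (Nat.zero_le r) 0)
    change |η (scal g x l)| ≤ _
    rw [mul_assoc]
    refine hC₁ _ (by exact_mod_cast scal_contDiff hg x l)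
      ((isCompact_closedBall x l).of_isClosed_subset (isClosed_tsupport _) hts) hts _
      fun k hk y => ?_
    rw [norm_iteratedFDeriv_scal (hg.of_le (by exact_mod_cast hk)) x hl, mul_assoc]
    have h1 : (l⁻¹) ^ k ≤ (l⁻¹) ^ r := pow_le_pow_right₀ (one_le_inv_iff₀.2 ⟨hl, hl1⟩) hk
    gcongr
    exact hB k hk _

lemma localNegBound_of_negBoundOn {r R : ℕ} {α C' : ℝ} {η : (Rd d → ℝ) →ₗ[ℝ] ℝ}
    (h : ∀ (K : Set (Rd d)) (C : ℝ), NegBoundOn R α η (Metric.cthickening 1 K) C →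
      NegBoundOn r α η K (C' * C)) (hR : LocalNegBound R α η) : LocalNegBound r α η :=
  fun K hK => let ⟨C, hC⟩ := hR _ hK.cthickening
    ⟨C' * C, h K C hC⟩

end Comparison

/-- The space `C^{-α}` does not depend on the integer `r > α` used in its definition:
for two such integers `r, r'` the two conditions are equivalent, and quantitatively the
best constants over a compact set are bounded by a universal multiple (depending only on
`d, α, r, r'`) of each other, taken over a slightly larger compact set. -/
theorem Cneg_independent_of_r
    (d r r' : ℕ) (hd : 1 ≤ d) (α : ℝ) (hα : 0 < α) (hr : α < r) (hr' : α < r') :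
    ∃ C'' : ℝ, 0 ≤ C'' ∧
      ∀ η : (Rd d → ℝ) →ₗ[ℝ] ℝ, CmContinuous (min r r') η →
        (LocalNegBound r α η ↔ LocalNegBound r' α η) ∧
        ∀ K : Set (Rd d), IsCompact K → ∀ C : ℝ,
          (NegBoundOn r α η (Metric.cthickening 1 K) C →
            NegBoundOn r' α η K (C'' * C)) ∧
          (NegBoundOn r' α η (Metric.cthickening 1 K) C →
            NegBoundOn r α η K (C'' * C)) := by
  rcases le_total r r' with h | h
  · obtain ⟨C', hC'1, hC'⟩ := exists_negBoundOn hd h hr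
    refine ⟨C', by linarith, fun η hη => ?_⟩
    rw [min_eq_left h] at hη
    have h1 : ∀ (K : Set (Rd d)) (C : ℝ), NegBoundOn r α η (Metric.cthickening 1 K) C →
        NegBoundOn r' α η K (C' * C) := fun K C hC => hC.of_le h hC'1
    have h2 := hC' η hη
    exact ⟨⟨localNegBound_of_negBoundOn h1, localNegBound_of_negBoundOn h2⟩,
      fun K _ C => ⟨h1 K C, h2 K C⟩⟩
  · obtain ⟨C', hC'1, hC'⟩ := exists_negBoundOn hd h hr'
    refine ⟨C', by linarith, fun η hη => ?_⟩
    rw [min_eq_right h] at hη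
    have h1 : ∀ (K : Set (Rd d)) (C : ℝ), NegBoundOn r' α η (Metric.cthickening 1 K) C →
        NegBoundOn r α η K (C' * C) := fun K C hC => hC.of_le h hC'1
    have h2 := hC' η hη
    exact ⟨⟨localNegBound_of_negBoundOn h2, localNegBound_of_negBoundOn h1⟩,
      fun K _ C => ⟨h2 K C, h1 K C⟩⟩
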